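/- arXiv:1211.0976 — 4 statements merged into one kernel-verified Lean document; each statement's English description precedes it below -/
import Mathlib

section
/- Assume B₀ = k and that the associated graded ring gr(B) is an integral domain which is finitely generated as a k-algebra. Then B and the Rees algebra B̃ are integral domains finitely generated as k-algebras, the principal ideal (s) of B̃ is a prime ideal of height 1 with B̃/(s) ≅ gr(B), and the Krull dimension of B equals the Krull dimension of gr(B). -/
open scoped BigOperators

section

theorem aux_goingUp (R S : Type) [CommRing R] [CommRing S] [Algebra R S] [Algebra.IsIntegral R S] :
    Algebra.HasGoingUp R S := by
  refine ⟨fun {q} _ P _ h => ?_⟩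
  obtain ⟨Q, h1, h2, h3⟩ := Ideal.exists_ideal_over_prime_of_isIntegral q P h.le
  exact ⟨Q, h1, h2, ⟨h3.symm⟩⟩

theorem aux_dim_integral (R S : Type) [CommRing R] [CommRing S] [Algebra R S]
    [Algebra.IsIntegral R S] (hinj : Function.Injective (algebraMap R S)) :
    ringKrullDim S = ringKrullDim R := by
  have := aux_goingUp R S
  apply le_antisymm
  · refine Order.krullDim_le_of_strictMono (PrimeSpectrum.comap (algebraMap R S)) ?_
    intro p q hpq
    exact Ideal.IsIntegral.comap_lt_comap (R := R) (I := p.asIdeal) (J := q.asIdeal) hpq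
  · refine iSup_le fun l => ?_
    obtain ⟨Q, hQ1, hQ2, hQ⟩ := Ideal.exists_ideal_over_prime_of_isIntegral (S := S) 
      (RelSeries.head l).asIdeal ⊥ (by
        intro x hx
        have : x = 0 := hinj (by simpa using hx)
        simp [this])
    have : Q.LiesOver (RelSeries.head l).asIdeal := ⟨hQ.symm⟩
    obtain ⟨L, hL, _⟩ := Ideal.exists_ltSeries_of_hasGoingUp l Q
    rw [← hL]
    exact Order.LTSeries.length_le_krullDim L

theorem aux_dim_trdeg (k A : Type) [Field k] [CommRing A] [IsDomain A] [Algebra k A]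
    [Algebra.FiniteType k A] :
    ∃ s : ℕ, ringKrullDim A = s ∧ Algebra.trdeg k A = s := by
  obtain ⟨s, g, hg, hi⟩ := exists_integral_inj_algHom_of_fg k A
  refine ⟨s, ?_, ?_⟩
  · algebraize [g.toRingHom]
    have : Algebra.IsIntegral (MvPolynomial (Fin s) k) A := ⟨hi⟩
    rw [aux_dim_integral (MvPolynomial (Fin s) k) A hg]
    simp
  · algebraize [g.toRingHom]
    have : Algebra.IsIntegral (MvPolynomial (Fin s) k) A := ⟨hi⟩
    have : FaithfulSMul (MvPolynomial (Fin s) k) A := (faithfulSMul_iff_algebraMap_injective _ _).2 hg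
    have : IsScalarTower k (MvPolynomial (Fin s) k) A := by
      refine IsScalarTower.of_algebraMap_eq fun x => ?_
      exact (g.commutes x).symm
    rw [← trdeg_add_eq k (MvPolynomial (Fin s) k) (A := A), trdeg_eq_zero (R := MvPolynomial (Fin s) k) (A := A),
      MvPolynomial.trdeg_of_isDomain]
    simp

theorem aux_dim_mono (k A A' : Type) [Field k] [CommRing A] [IsDomain A] [Algebra k A]
    [Algebra.FiniteType k A] [CommRing A'] [IsDomain A'] [Algebra k A']
    [Algebra.FiniteType k A'] (f : A →ₐ[k] A') (hf : Function.Injective f) :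
    ringKrullDim A ≤ ringKrullDim A' := by
  obtain ⟨s, h1, h2⟩ := aux_dim_trdeg k A
  obtain ⟨t, h3, h4⟩ := aux_dim_trdeg k A'
  have := trdeg_le_of_injective f hf
  rw [h2, h4] at this
  rw [h1, h3]
  exact_mod_cast this

open Polynomial
theorem aux_dim_upper (k B : Type) [Field k] [CommRing B] [Algebra k B] [IsDomain B]
    [Algebra.FiniteType k B] (Rees : Subalgebra k B[X]) [Algebra.FiniteType k Rees]
    (sE : Rees) (hsE : (sE : B[X]) = X) : 
    ringKrullDim (Rees ⧸ Ideal.span {sE}) ≤ ringKrullDim B := by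
  have h1 := ringKrullDim_quotient_succ_le_of_nonZeroDivisor (r := sE)
    (mem_nonZeroDivisors_of_ne_zero (by rintro rfl; simp at hsE; exact X_ne_zero hsE.symm))
  have h2 := aux_dim_mono k Rees B[X] Rees.val Subtype.val_injective
  have : IsNoetherianRing B := Algebra.FiniteType.isNoetherianRing k B
  rw [Polynomial.ringKrullDim_of_isNoetherianRing] at h2
  obtain ⟨t, h4, -⟩ := aux_dim_trdeg k B
  rw [h4] at h2 ⊢
  have h3 := h1.trans h2
  generalize ringKrullDim (Rees ⧸ Ideal.span {sE}) = d at h3 ⊢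
  induction d using WithBot.recBotCoe with
  | bot => exact bot_le
  | coe d =>
    have h5 : d + 1 ≤ (t : ℕ∞) + 1 := by exact_mod_cast h3
    have h6 : d ≤ (t : ℕ∞) := (ENat.add_le_add_iff_right (by simp)).1 h5
    exact_mod_cast h6


theorem aux_dim_lower (k B : Type) [Field k] [CommRing B] [Algebra k B] [IsDomain B]
    (F : ℤ → Submodule k B)
    (hB0 : F 0 = Submodule.span k {(1 : B)})
    (Rees : Subalgebra k B[X]) [IsNoetherianRing Rees]
    (hRees : ∀ f : Polynomial B, f ∈ Rees ↔ ∀ i : ℕ, f.coeff i ∈ F (i : ℤ))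
    (hmon : ∀ b : B, ∃ n : ℕ, monomial n b ∈ Rees)
    (sE : Rees) (hsE : (sE : B[X]) = X) : 
    ringKrullDim B ≤ ringKrullDim (Rees ⧸ Ideal.span {sE}) := by
  let m : PrimeSpectrum Rees := ⟨RingHom.ker ((constantCoeff (R := B)).comp Rees.val.toRingHom),
    RingHom.ker_isPrime _⟩
  have hmem : ∀ f : Rees, f ∈ m.asIdeal ↔ (f : B[X]).coeff 0 = 0 := by
    intro f; simp [m, RingHom.mem_ker]
  let φ : PrimeSpectrum B → PrimeSpectrum Rees := fun p =>
    ⟨(p.asIdeal.map (C : B →+* B[X])).comap Rees.val.toRingHom,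
      have : (p.asIdeal.map (C : B →+* B[X])).IsPrime := (Ideal.isPrime_map_C_iff_isPrime _).2 p.2
      Ideal.comap_isPrime _ _⟩
  have hφ : ∀ p (f : Rees), f ∈ (φ p).asIdeal ↔ ∀ n, (f : B[X]).coeff n ∈ p.asIdeal := by
    intro p f
    simp only [φ, Ideal.mem_comap]
    exact Ideal.mem_map_C_iff
  have hφm : StrictMono φ := by
    intro p q hpq
    obtain ⟨h1, x, hxq, hxp⟩ := SetLike.lt_iff_le_and_exists.mp (show p.asIdeal < q.asIdeal from hpq)
    change (φ p).asIdeal < (φ q).asIdeal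
    refine SetLike.lt_iff_le_and_exists.mpr ⟨fun f hf => ?_, ?_⟩
    · rw [hφ] at hf ⊢
      exact fun n => h1 (hf n)
    · obtain ⟨n, hn⟩ := hmon x
      refine ⟨⟨_, hn⟩, ?_, ?_⟩
      · rw [hφ]; intro i
        rw [coeff_monomial]; split_ifs
        · exact hxq
        · exact zero_mem _
      · rw [hφ]; intro h
        exact hxp (by simpa using h n)
  have hφlt : ∀ p, φ p < m := by
    intro p
    change (φ p).asIdeal < m.asIdeal
    refine SetLike.lt_iff_le_and_exists.mpr ⟨fun f hf => ?_, sE, ?_, ?_⟩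
    · rw [hφ] at hf
      rw [hmem]
      have h0 := (hRees f).1 f.2 0
      have h1 := hf 0
      simp only [Nat.cast_zero, hB0, Submodule.mem_span_singleton] at h0
      obtain ⟨c, hc⟩ := h0
      by_contra hne
      have hc0 : c ≠ 0 := by rintro rfl; simp at hc; exact hne hc.symm
      rw [← hc] at h1
      refine p.2.ne_top ((Ideal.eq_top_iff_one _).2 ?_)
      have := Submodule.smul_of_tower_mem p.asIdeal c⁻¹ h1
      rwa [smul_smul, inv_mul_cancel₀ hc0, one_smul] at this
    · rw [hmem, hsE]; simp
    · rw [hφ, hsE]; intro h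
      exact p.2.ne_top ((Ideal.eq_top_iff_one _).2 (by simpa using h 1))
  have hmp : m.asIdeal.IsPrime := m.2
  have hle := Ideal.height_le_ringKrullDim_quotient_add_one (r := sE) (p := m.asIdeal)
    ((hmem _).2 (by simp [hsE]))
  rw [PrimeSpectrum.height_eq_orderHeight] at hle
  refine iSup_le fun l => ?_
  have h1 : ((l.length + 1 : ℕ) : ℕ∞) ≤ Order.height m := by
    have := Order.length_le_height (p := (l.map φ hφm).snoc m (by
      simpa using hφlt _)) (x := m) (by simp)
    simpa using this
  have h2 : (((l.length + 1 : ℕ) : ℕ∞) : WithBot ℕ∞) ≤ ringKrullDim (Rees ⧸ Ideal.span {sE}) + 1 :=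
    le_trans (by exact_mod_cast h1) hle
  generalize ringKrullDim (Rees ⧸ Ideal.span {sE}) = d at *
  induction d using WithBot.recBotCoe with
  | bot => simp at h2
  | coe d =>
    have h5 : (l.length : ℕ∞) + 1 ≤ d + 1 := by exact_mod_cast h2
    have h6 : (l.length : ℕ∞) ≤ d := (ENat.add_le_add_iff_right (by simp)).1 h5
    exact_mod_cast h6

theorem aux_proj (k G : Type) [Field k] [CommRing G] [Algebra k G] (M : ℤ → Submodule k G)
    (h : DirectSum.IsInternal M) : ∃ P : ℤ → G →ₗ[k] G,
      (∀ n, ∀ x ∈ M n, P n x = x) ∧ ∀ n m, n ≠ m → ∀ x ∈ M m, P n x = 0 := by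
  classical
  let _ := h.chooseDecomposition
  refine ⟨fun n => (M n).subtype ∘ₗ DirectSum.component k ℤ (fun i => M i) n ∘ₗ
    (DirectSum.decomposeLinearEquiv M).toLinearMap, ?_, ?_⟩
  · intro n x hx
    exact DirectSum.decompose_of_mem_same M hx
  · intro n m hnm x hx
    exact DirectSum.decompose_of_mem_ne M hx hnm.symm

theorem aux_domain (k B : Type) [Field k] [CommRing B] [Algebra k B]
    (F : ℤ → Submodule k B)
    (hneg : ∀ m : ℤ, m < 0 → F m = ⊥)
    (hmono : Monotone F)
    (hone : (1 : B) ∈ F 0)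
    (hmul : ∀ (i j : ℤ), ∀ a ∈ F i, ∀ b ∈ F j, a * b ∈ F (i + j))
    (hexh : ∀ x : B, ∃ m : ℤ, x ∈ F m)
    (G : Type) [CommRing G] [Algebra k G]
    (σ : ∀ n : ℤ, F n →ₗ[k] G)
    (hker : ∀ (n : ℤ) (x : F n), σ n x = 0 ↔ (x : B) ∈ F (n - 1))
    (hσmul : ∀ (i j : ℤ) (a : F i) (b : F j) (c : F (i + j)),
      (c : B) = (a : B) * (b : B) → σ (i + j) c = σ i a * σ j b)
    (hσone : ∀ o : F 0, (o : B) = 1 → σ 0 o = 1)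
    (hGdom : IsDomain G) : IsDomain B := by
  have hnt : Nontrivial B := by
    by_contra hn
    rw [not_nontrivial_iff_subsingleton] at hn
    have h1 := hσone ⟨1, hone⟩ rfl
    rw [Subsingleton.elim (⟨1, hone⟩ : F 0) 0, map_zero] at h1
    exact zero_ne_one h1
  have hord : ∀ a : B, a ≠ 0 → ∃ n, a ∈ F n ∧ a ∉ F (n - 1) := by
    intro a ha
    have hb : ∀ z : ℤ, a ∈ F z → 0 ≤ z := by
      intro z hz
      by_contra hlt
      rw [hneg z (by omega)] at hz
      exact ha (by simpa using hz)
    obtain ⟨n, hn, hmin⟩ := Int.exists_least_of_bdd ⟨0, hb⟩ (hexh a)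
    exact ⟨n, hn, fun h => by have := hmin _ h; omega⟩
  have : NoZeroDivisors B := by
    refine ⟨fun {a b} hab => ?_⟩
    by_contra! hne
    obtain ⟨i, hi, hi'⟩ := hord a hne.1
    obtain ⟨j, hj, hj'⟩ := hord b hne.2
    have h := hσmul i j ⟨a, hi⟩ ⟨b, hj⟩ 0 (by simp [hab])
    rw [map_zero] at h
    rcases mul_eq_zero.1 h.symm with h | h
    · exact hi' ((hker _ _).1 h)
    · exact hj' ((hker _ _).1 h)
  exact NoZeroDivisors.to_isDomain B

/-- The map `B̃ → gr B`. -/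
theorem aux_pi (k B : Type) [Field k] [CommRing B] [Algebra k B]
    (F : ℤ → Submodule k B)
    (hneg : ∀ m : ℤ, m < 0 → F m = ⊥)
    (hone : (1 : B) ∈ F 0)
    (hmul : ∀ (i j : ℤ), ∀ a ∈ F i, ∀ b ∈ F j, a * b ∈ F (i + j))
    (G : Type) [CommRing G] [Algebra k G]
    (σ : ∀ n : ℤ, F n →ₗ[k] G)
    (hker : ∀ (n : ℤ) (x : F n), σ n x = 0 ↔ (x : B) ∈ F (n - 1))
    (hσmul : ∀ (i j : ℤ) (a : F i) (b : F j) (c : F (i + j)),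
      (c : B) = (a : B) * (b : B) → σ (i + j) c = σ i a * σ j b)
    (hσone : ∀ o : F 0, (o : B) = 1 → σ 0 o = 1)
    (hinternal : DirectSum.IsInternal fun n : ℤ => LinearMap.range (σ n))
    (Rees : Subalgebra k (Polynomial B))
    (hRees : ∀ f : Polynomial B, f ∈ Rees ↔ ∀ i : ℕ, f.coeff i ∈ F (i : ℤ)) :
    ∃ π : Rees →ₐ[k] G, Function.Surjective π ∧
      (∀ f g : Rees, ∀ n : ℕ, π f = π g → 
        (f : B[X]).coeff n - (g : B[X]).coeff n ∈ F ((n : ℤ) - 1)) ∧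
      (∀ f : Rees, (∀ n : ℕ, (f : B[X]).coeff n ∈ F ((n : ℤ) - 1)) → π f = 0) := by
  choose τ hτ using fun n : ℤ => LinearMap.exists_extend (σ n)
  have hτ' : ∀ n (x : B) (hx : x ∈ F n), τ n x = σ n ⟨x, hx⟩ := by
    intro n x hx
    rw [← hτ n]; rfl
  obtain ⟨P, hP1, hP2⟩ := aux_proj k G _ hinternal
  let π₀ : B[X] →ₗ[k] G := Polynomial.lsum (fun n : ℕ => τ n)
  have hπ₀ : ∀ f, π₀ f = f.sum (fun n b => τ n b) := fun f => rfl
  have hmulτ : ∀ (i j : ℕ) (a b : B), a ∈ F i → b ∈ F j →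
      τ ((i + j : ℕ) : ℤ) (a * b) = τ i a * τ j b := by
    intro i j a b ha hb
    rw [hτ' _ _ ha, hτ' _ _ hb, Nat.cast_add, hτ' _ _ (hmul _ _ _ ha _ hb)]
    exact hσmul _ _ _ _ _ rfl
  have hπmon : ∀ (n : ℕ) (b : B), π₀ (monomial n b) = τ n b := by
    intro n b
    rw [hπ₀, sum_monomial_index]; simp
  let π : Rees →ₐ[k] G := AlgHom.ofLinearMap (π₀ ∘ₗ Rees.val.toLinearMap) (by
      change π₀ (1 : B[X]) = 1
      rw [← monomial_zero_one, hπmon, Nat.cast_zero, hτ' _ _ hone]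
      exact hσone _ rfl) (by
      intro f g
      change π₀ ((f : B[X]) * g) = π₀ f * π₀ g
      rw [mul_eq_sum_sum, map_sum, hπ₀, hπ₀, sum_def, sum_def, Finset.sum_mul_sum]
      refine Finset.sum_congr rfl fun i _ => ?_
      rw [sum_def, map_sum]
      refine Finset.sum_congr rfl fun j _ => ?_
      rw [hπmon, hmulτ _ _ _ _ ((hRees _).1 f.2 i) ((hRees _).1 g.2 j)])
  have hπ : ∀ f : Rees, π f = π₀ f := fun f => rfl
  have hPπ : ∀ (f : Rees) (n : ℕ), P n (π f) = τ n ((f : B[X]).coeff n) := by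
    intro f n
    rw [hπ, hπ₀, sum_def, map_sum]
    have hm : ∀ i : ℕ, τ i ((f : B[X]).coeff i) ∈ LinearMap.range (σ i) := fun i => by
      rw [hτ' _ _ ((hRees _).1 f.2 i)]; exact ⟨_, rfl⟩
    rw [Finset.sum_eq_single n]
    · exact hP1 _ _ (hm n)
    · intro i _ hi
      exact hP2 _ _ (by exact_mod_cast hi.symm) _ (hm i)
    · intro hn
      rw [notMem_support_iff.1 hn]; simp
  refine ⟨π, ?_, ?_, ?_⟩
  · rw [← AlgHom.range_eq_top, ← Algebra.toSubmodule_eq_top, eq_top_iff,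
      ← hinternal.submodule_iSup_eq_top, iSup_le_iff]
    rintro n _ ⟨⟨x, hx⟩, rfl⟩
    by_cases hn : n < 0
    · have : x = 0 := by rw [hneg n hn] at hx; simpa using hx
      subst this
      have : σ n ⟨0, hx⟩ = 0 := map_zero (σ n)
      rw [this]; exact zero_mem _
    · obtain ⟨m, rfl⟩ := Int.eq_ofNat_of_zero_le (not_lt.1 hn)
      refine ⟨⟨monomial m x, (hRees _).2 fun i => ?_⟩, ?_⟩
      · rw [coeff_monomial]; split_ifs with h
        · subst h; exact hx
        · exact zero_mem _
      · change π₀ (monomial m x) = _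
        rw [hπmon, hτ' _ _ hx]
  · intro f g n h
    have h1 := hPπ (f - g) n
    rw [map_sub, h, sub_self, map_zero, hτ' _ _ ((hRees _).1 (f - g).2 n)] at h1
    have := (hker _ _).1 h1.symm
    simpa using this
  · intro f hf
    rw [hπ, hπ₀, sum_def]
    refine Finset.sum_eq_zero fun n _ => ?_
    rw [hτ' _ _ ((hRees _).1 f.2 n)]
    exact (hker _ _).2 (hf n)

theorem aux_fg (k B : Type) [Field k] [CommRing B] [Algebra k B]
    (F : ℤ → Submodule k B)
    (hneg : ∀ m : ℤ, m < 0 → F m = ⊥)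
    (G : Type) [CommRing G] [Algebra k G]
    (hGfg : Algebra.FiniteType k G)
    (Rees : Subalgebra k (Polynomial B))
    (hRees : ∀ f : Polynomial B, f ∈ Rees ↔ ∀ i : ℕ, f.coeff i ∈ F (i : ℤ))
    (hX : X ∈ Rees)
    (π : Rees →ₐ[k] G) (hs : Function.Surjective π)
    (hinj : ∀ f g : Rees, ∀ n : ℕ, π f = π g → 
        (f : B[X]).coeff n - (g : B[X]).coeff n ∈ F ((n : ℤ) - 1)) :
    Algebra.FiniteType k Rees := by
  classical
  have hmon : ∀ (n : ℕ) (b : B), b ∈ F n → monomial n b ∈ Rees := by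
    intro n b hb
    refine (hRees _).2 fun i => ?_
    rw [coeff_monomial]; split_ifs with h
    · subst h; exact hb
    · exact zero_mem _
  obtain ⟨T, hT⟩ := hGfg.out
  choose l hl using hs
  let W : Finset B[X] := insert X (T.biUnion fun t => 
    ((l t : B[X]).support).image fun n => monomial n ((l t : B[X]).coeff n))
  have hWR : (W : Set B[X]) ⊆ Rees := by
    intro w hw
    simp only [W, Finset.coe_insert, Set.mem_insert_iff, Finset.mem_coe, Finset.mem_biUnion,
      Finset.mem_image] at hw
    rcases hw with rfl | ⟨t, _, n, _, rfl⟩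
    · exact hX
    · exact hmon _ _ ((hRees _).1 (l t).2 n)
  set S := Algebra.adjoin k (W : Set B[X]) with hS
  have hSR : S ≤ Rees := Algebra.adjoin_le hWR
  have hXS : X ∈ S := Algebra.subset_adjoin (by simp [W])
  -- `S` is graded
  have hgr : ∀ f ∈ S, ∀ n, monomial n (f.coeff n) ∈ S := by
    intro f hf
    induction hf using Algebra.adjoin_induction with
    | mem x hx =>
      have hmn : ∀ m b, monomial m b ∈ S → ∀ n, monomial n ((monomial m b).coeff n) ∈ S := by
        intro m b hb n
        rw [coeff_monomial]; split_ifs with h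
        · subst h; exact hb
        · simp
      have hx' := hx
      simp only [W, Finset.coe_insert, Set.mem_insert_iff, Finset.mem_coe, Finset.mem_biUnion,
        Finset.mem_image] at hx
      rcases hx with rfl | ⟨t, _, n, _, rfl⟩
      · exact hmn 1 1 hXS
      · exact hmn _ _ (Algebra.subset_adjoin hx')
    | algebraMap r =>
      intro n
      rw [Polynomial.algebraMap_apply, coeff_C]; split_ifs with h
      · subst h
        exact S.algebraMap_mem r
      · simp
    | add x y _ _ hx hy =>
      intro n
      rw [coeff_add, map_add]
      exact add_mem (hx n) (hy n)
    | mul x y _ _ hx hy =>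
      intro n
      rw [coeff_mul, map_sum]
      refine sum_mem fun p hp => ?_
      rw [← Finset.HasAntidiagonal.mem_antidiagonal.1 hp, ← monomial_mul_monomial]
      exact mul_mem (hx _) (hy _)
  have hsur : ∀ g : G, ∃ f : Rees, (f : B[X]) ∈ S ∧ π f = g := by
    have : (S.comap Rees.val).map π = ⊤ := by
      rw [eq_top_iff, ← hT]
      refine Algebra.adjoin_le fun t ht => ⟨l t, ?_, hl t⟩
      change (l t : B[X]) ∈ S
      rw [as_sum_support (l t : B[X])]
      refine sum_mem fun n hn => Algebra.subset_adjoin ?_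
      simp only [W, Finset.coe_insert, Set.mem_insert_iff, Finset.mem_coe, Finset.mem_biUnion,
        Finset.mem_image]
      exact Or.inr ⟨t, ht, n, hn, rfl⟩
    intro g
    have hg : g ∈ (S.comap Rees.val).map π := by rw [this]; trivial
    obtain ⟨f, hf, hfg⟩ := hg
    exact ⟨f, hf, hfg⟩
  have key : ∀ (n : ℕ) (b : B), b ∈ F n → monomial n b ∈ S := by
    intro n
    induction n with
    | zero =>
      intro b hb
      obtain ⟨f, hf, hfb⟩ := hsur (π ⟨monomial 0 b, hmon 0 b hb⟩)
      have h := hinj _ _ 0 hfb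
      rw [hneg _ (by simp)] at h
      have h' : (f : B[X]).coeff 0 = b := by simpa [sub_eq_zero] using h
      have := hgr _ hf 0
      rwa [h'] at this
    | succ n ih =>
      intro b hb
      obtain ⟨f, hf, hfb⟩ := hsur (π ⟨monomial (n + 1) b, hmon (n + 1) b hb⟩)
      have h := hinj _ _ (n + 1) hfb
      have h' : (f : B[X]).coeff (n + 1) - b ∈ F n := by simpa using h
      have h1 := mul_mem (ih _ h') hXS
      have h2 := hgr _ hf (n + 1)
      rw [monomial_mul_X, map_sub] at h1
      have h3 := sub_mem h2 h1
      rwa [sub_sub_cancel] at h3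
  have hRS : Rees = S := by
    refine le_antisymm (fun f hf => ?_) hSR
    rw [as_sum_support f]
    exact sum_mem fun n _ => key _ _ ((hRees f).1 hf n)
  rw [← Subalgebra.fg_iff_finiteType, hRS]
  exact ⟨W, rfl⟩

end

/-- Assume `B₀ = k` and that `gr(B)` is an integral domain, finitely
generated as a `k`-algebra.  Then `B` and the Rees algebra `B̃` are integral domains,
finitely generated as `k`-algebras; the principal ideal `(s)` of `B̃` is a prime ideal
of height `1` with `B̃/(s) ≅ gr(B)`; and the Krull dimension of `B` equals the Krull
dimension of `gr(B)`. -/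
theorem statement8 (k B : Type) [Field k] [CommRing B] [Algebra k B]
    (F : ℤ → Submodule k B)
    (hneg : ∀ m : ℤ, m < 0 → F m = ⊥)
    (hmono : Monotone F)
    (hone : (1 : B) ∈ F 0)
    (hmul : ∀ (i j : ℤ), ∀ a ∈ F i, ∀ b ∈ F j, a * b ∈ F (i + j))
    (hexh : ∀ x : B, ∃ m : ℤ, x ∈ F m)
    -- `B₀ = k`:
    (hB0 : F 0 = Submodule.span k {(1 : B)})
    -- the associated graded ring `G = gr(B)`, given via symbol maps:
    (G : Type) [CommRing G] [Algebra k G]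
    (σ : ∀ n : ℤ, F n →ₗ[k] G)
    (hker : ∀ (n : ℤ) (x : F n), σ n x = 0 ↔ (x : B) ∈ F (n - 1))
    (hσmul : ∀ (i j : ℤ) (a : F i) (b : F j) (c : F (i + j)),
      (c : B) = (a : B) * (b : B) → σ (i + j) c = σ i a * σ j b)
    (hσone : ∀ o : F 0, (o : B) = 1 → σ 0 o = 1)
    (hinternal : DirectSum.IsInternal fun n : ℤ => LinearMap.range (σ n))
    -- hypotheses: `gr(B)` is a domain, finitely generated as a `k`-algebra:
    (hGdom : IsDomain G)
    (hGfg : Algebra.FiniteType k G)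
    -- the Rees algebra `B̃ ⊆ B[s]`, and the element `s ∈ B̃`:
    (Rees : Subalgebra k (Polynomial B))
    (hRees : ∀ f : Polynomial B, f ∈ Rees ↔ ∀ i : ℕ, f.coeff i ∈ F (i : ℤ))
    (sE : Rees) (hsE : (sE : Polynomial B) = Polynomial.X) :
    (IsDomain B ∧ Algebra.FiniteType k B) ∧
    (IsDomain Rees ∧ Algebra.FiniteType k Rees) ∧
    -- `(s)` is a prime ideal of height `1` in `B̃`:
    (Ideal.span {sE}).IsPrime ∧
    (∃ q : Ideal Rees, q.IsPrime ∧ q < Ideal.span {sE}) ∧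
    (¬ ∃ q₁ q₂ : Ideal Rees, q₁.IsPrime ∧ q₂.IsPrime ∧
        q₁ < q₂ ∧ q₂ < Ideal.span {sE}) ∧
    -- `B̃/(s) ≅ gr(B)`:
    Nonempty ((Rees ⧸ Ideal.span {sE}) ≃ₐ[k] G) ∧
    -- `dim B = dim gr(B)`:
    ringKrullDim B = ringKrullDim G := by
  have hX : (Polynomial.X : Polynomial B) ∈ Rees := hsE ▸ sE.2
  have hBdom : IsDomain B := aux_domain k B F hneg hmono hone hmul hexh G σ hker hσmul hσone hGdom
  obtain ⟨π, hs, hinj, hzero⟩ := aux_pi k B F hneg hone hmul G σ hker hσmul hσone hinternal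
    Rees hRees
  have hRfg : Algebra.FiniteType k Rees := aux_fg k B F hneg G hGfg Rees hRees hX π hs hinj
  have hRdom : IsDomain Rees := inferInstance
  have hRnoeth : IsNoetherianRing Rees := Algebra.FiniteType.isNoetherianRing k Rees
  have hmon : ∀ b : B, ∃ n : ℕ, Polynomial.monomial n b ∈ Rees := by
    intro b
    obtain ⟨m, hm⟩ := hexh b
    refine ⟨m.toNat, (hRees _).2 fun i => ?_⟩
    rw [Polynomial.coeff_monomial]
    split_ifs with h
    · subst h
      exact hmono (Int.self_le_toNat m) hm
    · exact zero_mem _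
  have hBfg : Algebra.FiniteType k B := by
    refine Algebra.FiniteType.of_surjective
      (((Polynomial.aeval (R := B) (1 : B)).restrictScalars k).comp Rees.val) ?_
    intro b
    obtain ⟨n, hn⟩ := hmon b
    refine ⟨⟨_, hn⟩, ?_⟩
    simp [Polynomial.aeval_monomial]
  have hkerπ : RingHom.ker π = Ideal.span {sE} := by
    ext f
    rw [RingHom.mem_ker, Ideal.mem_span_singleton]
    constructor
    · intro hf
      have h1 : ∀ n : ℕ, (f : Polynomial B).coeff n ∈ F ((n : ℤ) - 1) := by
        intro n
        have := hinj f 0 n (by rw [hf, map_zero])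
        simpa using this
      have h0 : (f : Polynomial B).coeff 0 = 0 := by
        have := h1 0
        rw [hneg _ (by simp)] at this
        simpa using this
      refine ⟨⟨(f : Polynomial B).divX, (hRees _).2 fun i => ?_⟩, ?_⟩
      · rw [Polynomial.coeff_divX]
        simpa using h1 (i + 1)
      · apply Subtype.ext
        have := Polynomial.X_mul_divX_add (f : Polynomial B)
        rw [h0, map_zero, add_zero] at this
        simp only [MulMemClass.coe_mul, hsE]
        exact this.symm
    · rintro ⟨g, rfl⟩
      refine hzero _ fun n => ?_
      simp only [MulMemClass.coe_mul, hsE]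
      cases n with
      | zero => simp
      | succ n =>
        rw [Polynomial.coeff_X_mul]
        simpa using (hRees _).1 g.2 n
  have hprime : (Ideal.span {sE}).IsPrime := by
    rw [← hkerπ]; exact RingHom.ker_isPrime _
  have hs0 : sE ≠ 0 := by
    rintro rfl
    exact Polynomial.X_ne_zero hsE.symm
  let e : (Rees ⧸ Ideal.span {sE}) ≃ₐ[k] G :=
    (Ideal.quotientEquivAlgOfEq k hkerπ.symm).trans (Ideal.quotientKerAlgEquivOfSurjective hs)
  refine ⟨⟨hBdom, hBfg⟩, ⟨hRdom, hRfg⟩, hprime, ⟨⊥, Ideal.isPrime_bot, ?_⟩, ?_, ⟨e⟩, ?_⟩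
  · rw [bot_lt_iff_ne_bot, Ne, Ideal.span_singleton_eq_bot]
    exact hs0
  · rintro ⟨q₁, q₂, h1, h2, h12, h2s⟩
    have hle : (Ideal.span {sE}).height ≤ 1 :=
      Ideal.height_le_one_of_isPrincipal_of_mem_minimalPrimes (Ideal.span {sE}) _
        (by rw [Ideal.minimalPrimes_eq_subsingleton_self]; rfl)
    have ha := Ideal.height_add_one_le_of_lt_of_isPrime h12
    have hb := Ideal.height_add_one_le_of_lt_of_isPrime h2s
    have hc : (1 : ℕ∞) ≤ q₂.height := le_trans le_add_self ha
    have hd : (1 : ℕ∞) + 1 ≤ 1 := le_trans (le_trans (by gcongr) hb) hle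
    exact absurd hd (by decide)
  · have he : ringKrullDim (Rees ⧸ Ideal.span {sE}) = ringKrullDim G :=
      ringKrullDim_eq_of_ringEquiv e.toRingEquiv
    rw [← he]
    exact le_antisymm (aux_dim_lower k B F hB0 Rees hRees hmon sE hsE)
      (aux_dim_upper k B Rees sE hsE)
end

section
/- Assume the Krull dimension of A is strictly greater than 1, that A satisfies condition (*), and that the normalization Ā is a finitely generated A-module. Then the ring A' satisfies Serre's condition (S₂): depth(A'_q) ≥ min(2, ht(q)) for every prime ideal q of A'; moreover A' is contained in every subdomain of Ā which contains A, is Noetherian, and satisfies (S₂). -/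
set_option synthInstance.maxHeartbeats 1000000
set_option maxHeartbeats 1000000

/-!
`A` is a Noetherian integral domain with fraction field `K = FractionRing A`.
`A'` is the intersection, inside `K`, of the localizations `A_p` at all height-one
primes `p` of `A`; membership in `A'` is expressed by the predicate `MemHtOneLoc`.
The depth of a Noetherian local ring is the maximal length of a regular sequence in
its maximal ideal; Serre's condition `(S₂)` (`depth(A_p) ≥ min(2, ht p)` for all
primes `p`) is expressed by `SerreS2`, using the maximal ideal `p·A_p` of the
localization `A_p` and explicit chains of primes to express heights.
-/

/-- `P` is a prime ideal of height one: it is prime, there is a chain `q < P` of primes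
below it, but no chain `q₁ < q₂ < P` of primes below it. -/
def HeightOneIdeal {S : Type*} [CommRing S] (P : Ideal S) : Prop :=
  P.IsPrime ∧ (∃ q : Ideal S, q.IsPrime ∧ q < P) ∧
    ¬ ∃ q₁ q₂ : Ideal S, q₁.IsPrime ∧ q₂.IsPrime ∧ q₁ < q₂ ∧ q₂ < P

/-- `x ∈ A_p ⊆ K` for every height-one prime `p` of `A`, i.e. `x ∈ A'`. -/
def MemHtOneLoc (A : Type*) [CommRing A] (K : Type*) [CommRing K] [Algebra A K]
    (x : K) : Prop :=
  ∀ p : Ideal A, HeightOneIdeal p →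
    ∃ a s : A, s ∉ p ∧ x * algebraMap A K s = algebraMap A K a

/-- `r` is a regular sequence on `S` contained in the ideal `I`: each `r i` lies in `I`
and is a nonzerodivisor modulo the ideal generated by the previous terms. -/
def IsRegSeq {S : Type*} [CommRing S] (I : Ideal S) {d : ℕ} (r : Fin d → S) : Prop :=
  (∀ i, r i ∈ I) ∧ ∀ (i : Fin d) (x : S),
    r i * x ∈ Ideal.span {y : S | ∃ j : Fin d, j < i ∧ y = r j} →
    x ∈ Ideal.span {y : S | ∃ j : Fin d, j < i ∧ y = r j}

/-- Serre's condition `(S₂)`: for every prime `p` of `A`, the depth of the local ring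
`A_p` is at least `min(2, ht p)`; heights are expressed by chains of primes and depth
by the existence of regular sequences in the maximal ideal `p·A_p` of `A_p`. -/
def SerreS2 (A : Type*) [CommRing A] : Prop :=
  ∀ (p : Ideal A) (hp : p.IsPrime),
    ((∃ q : Ideal A, q.IsPrime ∧ q < p) →
      ∃ r : Fin 1 → Localization (@Ideal.primeCompl A _ p hp),
        IsRegSeq (p.map (algebraMap A (Localization (@Ideal.primeCompl A _ p hp)))) r) ∧
    ((∃ q₁ q₂ : Ideal A, q₁.IsPrime ∧ q₂.IsPrime ∧ q₁ < q₂ ∧ q₂ < p) →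
      ∃ r : Fin 2 → Localization (@Ideal.primeCompl A _ p hp),
        IsRegSeq (p.map (algebraMap A (Localization (@Ideal.primeCompl A _ p hp)))) r)

/-- Primes of the form `(R :_R w)` for elements of an overring. -/
lemma exists_prime_conductor (R K : Type*) [CommRing R] [IsNoetherianRing R] [Field K]
    [Algebra R K] (z : K) (hz : ¬ ∃ d : R, algebraMap R K d = z) :
    ∃ (P : Ideal R) (w : K), P.IsPrime ∧
      (∀ c : R, c ∈ P ↔ ∃ d : R, algebraMap R K d = algebraMap R K c * w) ∧
      (∀ c : R, (∃ d : R, algebraMap R K d = algebraMap R K c * z) → c ∈ P) := by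
  let N : Submodule R K := LinearMap.range (Algebra.linearMap R K)
  have hN : ∀ (y : K), y ∈ N ↔ ∃ d : R, algebraMap R K d = y := fun y => by
    simp [N, LinearMap.mem_range]
  have hx : (Submodule.Quotient.mk z : K ⧸ N) ≠ 0 := by
    rw [Ne, Submodule.Quotient.mk_eq_zero, hN]
    exact hz
  obtain ⟨P, hP, hle⟩ := exists_le_isAssociatedPrime_of_isNoetherianRing R
    (Submodule.Quotient.mk z : K ⧸ N) hx
  rw [isAssociatedPrime_iff] at hP
  obtain ⟨hPp, y, hy⟩ := hP
  obtain ⟨w, rfl⟩ := Submodule.Quotient.mk_surjective N y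
  have key : ∀ (c : R) (v : K),
      c ∈ (⊥ : Submodule R (K ⧸ N)).colon {(Submodule.Quotient.mk v : K ⧸ N)} ↔
        ∃ d : R, algebraMap R K d = algebraMap R K c * v := by
    intro c v
    rw [Submodule.mem_colon_singleton, Submodule.mem_bot, ← Submodule.Quotient.mk_smul,
      Submodule.Quotient.mk_eq_zero, hN, Algebra.smul_def]
  refine ⟨P, w, hPp, fun c => ?_, fun c hc => hle ((key c z).2 hc)⟩
  rw [hy]
  exact key c w

/-- In an integrally closed situation such a prime has no nonzero prime strictly below. -/
lemma conductor_no_chain (R K : Type*) [CommRing R] [IsDomain R] [IsNoetherianRing R] [Field K]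
    [Algebra R K] (hinj : Function.Injective (algebraMap R K))
    (hcl : ∀ w : K, IsIntegral R w → ∃ d : R, algebraMap R K d = w)
    (P : Ideal R) (hPp : P.IsPrime) (w : K)
    (hP : ∀ c : R, c ∈ P ↔ ∃ d : R, algebraMap R K d = algebraMap R K c * w)
    (Q : Ideal R) (hQp : Q.IsPrime) (hQ0 : Q ≠ ⊥) (hQP : Q < P) : False := by
  have hw : ¬ ∃ d : R, algebraMap R K d = w := by
    intro h
    apply hPp.ne_top
    rw [Ideal.eq_top_iff_one, hP]
    simpa using h
  -- no nonzero ideal is stable under `w`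
  have stab : ∀ I : Ideal R, I ≠ ⊥ →
      ¬ ∀ c ∈ I, ∃ d ∈ I, algebraMap R K d = algebraMap R K c * w := by
    intro I hI h
    apply hw
    apply hcl
    refine isIntegral_of_smul_mem_submodule (M := K)
      (Submodule.map (Algebra.linearMap R K) I) ?_ ?_ w ?_
    · intro h0
      apply hI
      rw [eq_bot_iff]
      intro c hc
      have : algebraMap R K c ∈ Submodule.map (Algebra.linearMap R K) I := ⟨c, hc, rfl⟩
      rw [h0, Submodule.mem_bot] at this
      exact hinj (by simpa using this)
    · exact Submodule.FG.map _ (IsNoetherian.noetherian I)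
    · rintro _ ⟨c, hc, rfl⟩
      obtain ⟨d, hd, hde⟩ := h c hc
      refine ⟨d, hd, ?_⟩
      simp only [Algebra.linearMap_apply, smul_eq_mul]
      rw [hde, mul_comm]
  have hP0 : P ≠ ⊥ := fun h => by
    rw [h] at hQP
    exact not_lt_bot hQP
  have h1 : ∃ c ∈ P, ∃ u : R, u ∉ P ∧ algebraMap R K u = algebraMap R K c * w := by
    by_contra hcon
    apply stab P hP0
    intro c hc
    obtain ⟨d, hd⟩ := (hP c).1 hc
    refine ⟨d, ?_, hd⟩
    by_contra hdP
    exact hcon ⟨c, hc, d, hdP, hd⟩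
  obtain ⟨c, hc, u, hu, hue⟩ := h1
  have huQ : u ∉ Q := fun h => hu (hQP.le h)
  have rel : ∀ q d : R, algebraMap R K d = algebraMap R K q * w → u * q = c * d := by
    intro q d hd
    apply hinj
    rw [map_mul, map_mul, hue, hd]
    ring
  by_cases hcQ : c ∈ Q
  · apply hQP.not_ge
    intro q hq
    obtain ⟨d, hd⟩ := (hP q).1 hq
    have : u * q ∈ Q := by
      rw [rel q d hd]
      exact Q.mul_mem_right _ hcQ
    exact (hQp.mem_or_mem this).resolve_left huQ
  · apply stab Q hQ0
    intro q hq
    obtain ⟨d, hd⟩ := (hP q).1 (hQP.le hq)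
    refine ⟨d, ?_, hd⟩
    have : c * d ∈ Q := by
      rw [← rel q d hd]
      exact Q.mul_mem_left _ hq
    exact (hQp.mem_or_mem this).resolve_left hcQ

lemma span_lt_zero {S : Type*} [CommRing S] {d : ℕ} (r : Fin (d + 1) → S) :
    Ideal.span {y : S | ∃ j : Fin (d + 1), j < 0 ∧ y = r j} = ⊥ := by
  have : {y : S | ∃ j : Fin (d + 1), j < 0 ∧ y = r j} = ∅ := by
    ext y
    simp
  rw [this, Ideal.span_empty]

lemma span_lt_one {S : Type*} [CommRing S] (r : Fin 2 → S) :
    Ideal.span {y : S | ∃ j : Fin 2, j < 1 ∧ y = r j} = Ideal.span {r 0} := by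
  have : {y : S | ∃ j : Fin 2, j < 1 ∧ y = r j} = {r 0} := by
    ext y
    simp
  rw [this]

lemma isRegSeq_one {S : Type*} [CommRing S] [IsDomain S] (I : Ideal S) (x : S) (hx : x ∈ I)
    (hx0 : x ≠ 0) : IsRegSeq I (fun _ : Fin 1 => x) := by
  refine ⟨fun _ => hx, fun i y hy => ?_⟩
  obtain rfl : i = 0 := Subsingleton.elim _ _
  rw [span_lt_zero, Ideal.mem_bot] at hy ⊢
  exact (mul_eq_zero.1 hy).resolve_left hx0

lemma isRegSeq_two_iff {S : Type*} [CommRing S] [IsDomain S] (I : Ideal S) (r : Fin 2 → S) :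
    IsRegSeq I r ↔ r 0 ∈ I ∧ r 1 ∈ I ∧ (∀ x, r 0 * x = 0 → x = 0) ∧
      ∀ x, r 0 ∣ r 1 * x → r 0 ∣ x := by
  unfold IsRegSeq
  rw [Fin.forall_fin_two, Fin.forall_fin_two, span_lt_zero, span_lt_one]
  simp only [Ideal.mem_bot, Ideal.mem_span_singleton]
  tauto

/-- `(S₂)` forbids conductor primes of height at least two. -/
lemma conductor_no_chain_of_S2 (R K : Type*) [CommRing R] [IsDomain R] [Field K]
    [Algebra R K] (hinj : Function.Injective (algebraMap R K)) (hS : SerreS2 R)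
    (P : Ideal R) (hPp : P.IsPrime) (w : K)
    (hP : ∀ c : R, c ∈ P ↔ ∃ d : R, algebraMap R K d = algebraMap R K c * w) :
    ¬ ∃ q₁ q₂ : Ideal R, q₁.IsPrime ∧ q₂.IsPrime ∧ q₁ < q₂ ∧ q₂ < P := by
  intro hch
  obtain ⟨r, hr⟩ := (hS P hPp).2 hch
  have hle : P.primeCompl ≤ nonZeroDivisors R := P.primeCompl_le_nonZeroDivisors
  have : IsDomain (Localization P.primeCompl) := IsLocalization.isDomain_localization hle
  have hinjL : Function.Injective (algebraMap R (Localization P.primeCompl)) :=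
    IsLocalization.injective _ hle
  rw [isRegSeq_two_iff] at hr
  obtain ⟨h0, h1, hr0, hr1⟩ := hr
  rw [IsLocalization.mem_map_algebraMap_iff P.primeCompl] at h0 h1
  obtain ⟨⟨⟨p0, hp0⟩, ⟨s0, hs0⟩⟩, e0⟩ := h0
  obtain ⟨⟨⟨p1, hp1⟩, ⟨s1, hs1⟩⟩, e1⟩ := h1
  dsimp only at e0 e1
  obtain ⟨d0, hd0⟩ := (hP p0).1 hp0
  obtain ⟨d1, hd1⟩ := (hP p1).1 hp1
  have hr0ne : r 0 ≠ 0 := by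
    intro h
    exact one_ne_zero (hr0 1 (by rw [h, zero_mul]))
  have hs0' : s0 ≠ 0 := fun h => hs0 (h ▸ P.zero_mem)
  have hp0ne : p0 ≠ 0 := by
    intro h
    rw [h, map_zero] at e0
    rcases mul_eq_zero.1 e0 with h' | h'
    · exact hr0ne h'
    · exact hs0' (hinjL (by rw [h', map_zero]))
  have hrel : p1 * d0 = p0 * d1 := by
    apply hinj
    rw [map_mul, map_mul, hd0, hd1]
    ring
  have hrelL := congrArg (algebraMap R (Localization P.primeCompl)) hrel
  rw [map_mul, map_mul] at hrelL
  obtain ⟨y, hy⟩ := hr1 (algebraMap R _ s1 * algebraMap R _ d0)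
    ⟨algebraMap R _ s0 * algebraMap R _ d1, by
      rw [← mul_assoc, ← mul_assoc, e0, e1, hrelL]⟩
  obtain ⟨⟨b, ⟨t, ht⟩⟩, hbt⟩ := IsLocalization.surj P.primeCompl y
  dsimp only at hbt
  have fin : s0 * s1 * t * d0 = p0 * b := by
    apply hinjL
    simp only [map_mul]
    rw [← e0, ← hbt]
    linear_combination (algebraMap R (Localization P.primeCompl) s0 *
      algebraMap R (Localization P.primeCompl) t) * hy
  have hmem : s0 * s1 * t ∈ P := by
    rw [hP]
    refine ⟨b, ?_⟩
    have hp0K : algebraMap R K p0 ≠ 0 := fun h => hp0ne (hinj (by rw [h, map_zero]))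
    apply mul_left_cancel₀ hp0K
    rw [← map_mul, ← fin, map_mul, hd0]
    ring
  exact (P.primeCompl.mul_mem (P.primeCompl.mul_mem hs0 hs1) ht) hmem

/-- Construction of regular sequences of length two. -/
lemma exists_regSeq_two (R : Type*) [CommRing R] [IsDomain R] [IsNoetherianRing R]
    (p : Ideal R) (hp : p.IsPrime) (hp0 : p ≠ ⊥)
    (h : ∀ x t : R, x ≠ 0 → (∀ y ∈ p, x ∣ y * t) → x ∣ t) :
    ∃ r : Fin 2 → Localization (@Ideal.primeCompl R _ p hp),
        IsRegSeq (p.map (algebraMap R (Localization (@Ideal.primeCompl R _ p hp)))) r := by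
  obtain ⟨x, hx, hx0⟩ := Submodule.exists_mem_ne_zero_of_ne_bot hp0
  have key : ∃ y ∈ p, ∀ t, x ∣ y * t → x ∣ t := by
    by_contra hcon
    push Not at hcon
    have hsub : (p : Set R) ⊆ ⋃ q ∈ associatedPrimes R (R ⧸ Ideal.span {x}), q := by
      rw [biUnion_associatedPrimes_eq_zero_divisors]
      intro y hy
      obtain ⟨t, ht, ht'⟩ := hcon y hy
      refine ⟨Ideal.Quotient.mk _ t, ?_, ?_⟩
      · rwa [Ne, Ideal.Quotient.eq_zero_iff_mem, Ideal.mem_span_singleton]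
      · rw [Algebra.smul_def, Ideal.Quotient.algebraMap_eq, ← map_mul,
          Ideal.Quotient.eq_zero_iff_mem, Ideal.mem_span_singleton]
        exact ht
    obtain ⟨Q, hQ, hpQ⟩ := (p.subset_union_prime_finite
      (associatedPrimes.finite R (R ⧸ Ideal.span {x})) (f := id) 0 0
      fun _ h _ _ => h.isPrime).1 hsub
    rw [AssociatedPrimes.mem_iff, isAssociatedPrime_iff] at hQ
    obtain ⟨hQp, t, rfl⟩ := hQ
    obtain ⟨t, rfl⟩ := Ideal.Quotient.mk_surjective t
    have : x ∣ t := by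
      apply h x t hx0
      intro y hy
      have := hpQ hy
      rw [id, Submodule.mem_colon_singleton, Submodule.mem_bot, Algebra.smul_def,
        Ideal.Quotient.algebraMap_eq, ← map_mul, Ideal.Quotient.eq_zero_iff_mem,
        Ideal.mem_span_singleton] at this
      exact this
    apply hQp.ne_top
    rw [Ideal.eq_top_iff_one, Submodule.mem_colon_singleton, one_smul, Submodule.mem_bot,
      Ideal.Quotient.eq_zero_iff_mem, Ideal.mem_span_singleton]
    exact this
  obtain ⟨y, hy, hreg⟩ := key
  have hle : p.primeCompl ≤ nonZeroDivisors R := p.primeCompl_le_nonZeroDivisors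
  have : IsDomain (Localization p.primeCompl) := IsLocalization.isDomain_localization hle
  have hinjL : Function.Injective (algebraMap R (Localization p.primeCompl)) :=
    IsLocalization.injective _ hle
  refine ⟨![algebraMap R _ x, algebraMap R _ y], ?_⟩
  rw [isRegSeq_two_iff]
  refine ⟨Ideal.mem_map_of_mem _ hx, Ideal.mem_map_of_mem _ hy, ?_, ?_⟩
  · intro z hz
    refine (mul_eq_zero.1 hz).resolve_left fun h0 => hx0 (hinjL ?_)
    rw [map_zero]
    exact h0
  · intro z hz
    change algebraMap R _ x ∣ algebraMap R _ y * z at hz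
    change algebraMap R _ x ∣ z
    obtain ⟨a, ha⟩ := hz
    obtain ⟨⟨t, s⟩, hts⟩ := IsLocalization.surj p.primeCompl z
    obtain ⟨⟨u, v⟩, huv⟩ := IsLocalization.surj p.primeCompl a
    dsimp only at hts huv
    have e : y * (t * v) = x * (u * s) := by
      apply hinjL
      simp only [map_mul]
      rw [← hts, ← huv]
      linear_combination (algebraMap R (Localization p.primeCompl) s *
        algebraMap R (Localization p.primeCompl) v) * ha
    obtain ⟨k, hk⟩ := hreg _ ⟨_, e⟩
    have hu : IsUnit (algebraMap R (Localization p.primeCompl) (s * v)) :=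
      IsLocalization.map_units _ (s * v)
    have : algebraMap R (Localization p.primeCompl) x ∣
        z * algebraMap R (Localization p.primeCompl) (s * v) := by
      refine ⟨algebraMap R _ k, ?_⟩
      rw [← map_mul, ← hk, map_mul, map_mul, ← hts]
      ring
    exact (hu.dvd_mul_right).1 this

/-- Chains of length two pull back along integral extensions of domains. -/
lemma chain_comap (R S : Type*) [CommRing R] [CommRing S] [IsDomain R] [IsDomain S] [Algebra R S]
    [Algebra.IsIntegral R S] (P : Ideal S)
    (h : ∃ q₁ q₂ : Ideal S, q₁.IsPrime ∧ q₂.IsPrime ∧ q₁ < q₂ ∧ q₂ < P) :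
    ∃ q₁ q₂ : Ideal R, q₁.IsPrime ∧ q₂.IsPrime ∧ q₁ < q₂ ∧
      q₂ < P.comap (algebraMap R S) := by
  obtain ⟨q₁, q₂, h1, h2, h12, h2P⟩ := h
  have lt : ∀ I J : Ideal S, I.IsPrime → I < J →
      I.comap (algebraMap R S) < J.comap (algebraMap R S) := by
    intro I J hI hIJ
    obtain ⟨hle, x, hxJ, hxI⟩ := SetLike.lt_iff_le_and_exists.1 hIJ
    exact Ideal.comap_lt_comap_of_integral_mem_sdiff hle ⟨hxJ, hxI⟩
      (Algebra.IsIntegral.isIntegral x)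
  exact ⟨_, _, Ideal.comap_isPrime _ q₁, Ideal.comap_isPrime _ q₂, lt _ _ h1 h12, lt _ _ h2 h2P⟩

/-- Assume `dim A > 1`, condition (*), and that the normalization `Ā`
is a finitely generated `A`-module.  Then `A'` satisfies Serre's condition `(S₂)`, and
`A'` is contained in every subdomain of `Ā` which contains `A`, is Noetherian and
satisfies `(S₂)`. -/
theorem statement13 (A : Type) [CommRing A] [IsDomain A] [IsNoetherianRing A]
    (hdim : 1 < ringKrullDim A)
    (hstar : ∀ P : Ideal (integralClosure A (FractionRing A)), HeightOneIdeal P →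
      HeightOneIdeal (P.comap (algebraMap A (integralClosure A (FractionRing A)))))
    (hfin : Module.Finite A (integralClosure A (FractionRing A)))
    (A' : Subalgebra A (FractionRing A))
    (hA' : ∀ x : FractionRing A, x ∈ A' ↔ MemHtOneLoc A (FractionRing A) x) :
    SerreS2 A' ∧
    ∀ B : Subring (FractionRing A),
      (∀ a : A, algebraMap A (FractionRing A) a ∈ B) →
      (∀ x ∈ B, x ∈ integralClosure A (FractionRing A)) →
      IsDomain B → IsNoetherianRing B → SerreS2 B →
      ∀ x : FractionRing A, x ∈ A' → x ∈ B := by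
  classical
  let K := FractionRing A
  have hinjA : Function.Injective (algebraMap A (FractionRing A)) :=
    IsFractionRing.injective A (FractionRing A)
  have hfin' := hfin
  have hnC : IsNoetherianRing (integralClosure A (FractionRing A)) :=
    IsNoetherianRing.of_finite A _
  have hden : ∀ z : FractionRing A, ∃ s a : A, s ≠ 0 ∧
      algebraMap A (FractionRing A) a = algebraMap A (FractionRing A) s * z := by
    intro z
    obtain ⟨⟨a, s⟩, h⟩ := IsLocalization.surj (nonZeroDivisors A) z
    exact ⟨s, a, nonZeroDivisors.ne_zero s.2, by rw [← h, mul_comm]⟩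
  -- `A'` is integral over `A`
  have hsub : ∀ x ∈ A', x ∈ integralClosure A (FractionRing A) := by
    intro z hz
    by_contra hzC
    have hinjC : Function.Injective
        (algebraMap (integralClosure A (FractionRing A)) (FractionRing A)) :=
      Subtype.val_injective
    obtain ⟨P, w, hPp, hP, hPz⟩ := exists_prime_conductor
      (integralClosure A (FractionRing A)) (FractionRing A) z
      (by rintro ⟨d, rfl⟩; exact hzC d.2)
    have hP0 : P ≠ ⊥ := by
      obtain ⟨s, a, hs, ha⟩ := hden z
      intro h
      have h1 := hPz (algebraMap A _ s) ⟨algebraMap A _ a, ha⟩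
      rw [h, Ideal.mem_bot] at h1
      apply hs
      apply hinjA
      rw [map_zero]
      exact congrArg Subtype.val h1
    have hone : HeightOneIdeal P := by
      refine ⟨hPp, ⟨⊥, Ideal.isPrime_bot, bot_lt_iff_ne_bot.2 hP0⟩, ?_⟩
      rintro ⟨q₁, q₂, h1, h2, h12, h2P⟩
      refine conductor_no_chain _ (FractionRing A) hinjC ?_ P hPp w hP q₂ h2 ?_ h2P
      · intro v hv
        exact ⟨⟨v, isIntegral_trans (R := A) v hv⟩, rfl⟩
      · rintro rfl
        exact not_lt_bot h12
    obtain ⟨a, s, hs, hsa⟩ := (hA' z).1 hz _ (hstar P hone)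
    apply hs
    rw [Ideal.mem_comap]
    apply hPz
    refine ⟨algebraMap A _ a, ?_⟩
    change algebraMap A (FractionRing A) a = algebraMap A (FractionRing A) s * z
    rw [← hsa, mul_comm]
  refine ⟨?_, ?_⟩
  · have hleA : A' ≤ integralClosure A (FractionRing A) := hsub
    have : Module.Finite A A' :=
      Module.Finite.of_injective (Subalgebra.inclusion hleA).toLinearMap
        (Subalgebra.inclusion_injective hleA)
    have : IsNoetherianRing A' := IsNoetherianRing.of_finite A _
    have : Algebra.IsIntegral A A' := Algebra.IsIntegral.of_finite A A'
    intro p hp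
    refine ⟨?_, ?_⟩
    · rintro ⟨q, hq, hqp⟩
      have hp0 : p ≠ ⊥ := by
        rintro rfl
        exact not_lt_bot hqp
      obtain ⟨x, hx, hx0⟩ := Submodule.exists_mem_ne_zero_of_ne_bot hp0
      have hle : p.primeCompl ≤ nonZeroDivisors A' := p.primeCompl_le_nonZeroDivisors
      have : IsDomain (Localization p.primeCompl) := IsLocalization.isDomain_localization hle
      have hinjL : Function.Injective (algebraMap A' (Localization p.primeCompl)) :=
        IsLocalization.injective _ hle
      exact ⟨_, isRegSeq_one _ (algebraMap A' _ x) (Ideal.mem_map_of_mem _ hx)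
        fun h => hx0 (hinjL (by rw [h, map_zero]))⟩
    · intro hch
      have hp0 : p ≠ ⊥ := by
        rintro rfl
        obtain ⟨_, _, _, _, _, h⟩ := hch
        exact not_lt_bot h
      apply exists_regSeq_two A' p hp hp0
      intro x t hx0 hxt
      have hxK : (x : FractionRing A) ≠ 0 := fun h => hx0 (Subtype.ext h)
      have hmem : (t : FractionRing A) / x ∈ A' := by
        rw [hA']
        intro 𝔭 h𝔭
        have hnle : ¬ p.comap (algebraMap A A') ≤ 𝔭 := by
          intro hle
          obtain ⟨q₁, q₂, h1, h2, h12, h2P⟩ := chain_comap A A' p hch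
          exact h𝔭.2.2 ⟨q₁, q₂, h1, h2, h12, lt_of_lt_of_le h2P hle⟩
        obtain ⟨s, hs, hs𝔭⟩ := SetLike.not_le_iff_exists.1 hnle
        obtain ⟨k, hk⟩ := hxt _ hs
        have hkK : algebraMap A (FractionRing A) s * t = x * k := congrArg Subtype.val hk
        obtain ⟨a, s', hs', ha⟩ := (hA' k).1 k.2 𝔭 h𝔭
        refine ⟨a, s * s', fun h => (h𝔭.1.mem_or_mem h).elim hs𝔭 hs', ?_⟩
        rw [← ha, map_mul]
        field_simp
        linear_combination (algebraMap A (FractionRing A) s') * hkK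
      refine ⟨⟨_, hmem⟩, Subtype.ext ?_⟩
      change (t : FractionRing A) = x * (t / x)
      field_simp
  · intro B hAB hBC hBd hBn hBS x hx
    by_contra hxB
    have hinjB : Function.Injective (algebraMap B (FractionRing A)) := Subtype.val_injective
    obtain ⟨P, w, hPp, hP, hPz⟩ := exists_prime_conductor B (FractionRing A) x
      (by rintro ⟨d, rfl⟩; exact hxB d.2)
    have hnc := conductor_no_chain_of_S2 B (FractionRing A) hinjB hBS P hPp w hP
    have hP0 : ∃ b ∈ P, b ≠ 0 := by
      obtain ⟨s, a, hs, ha⟩ := hden x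
      refine ⟨⟨_, hAB s⟩, hPz _ ⟨⟨_, hAB a⟩, ha⟩, fun h => hs (hinjA ?_)⟩
      rw [map_zero]
      exact congrArg Subtype.val h
    let f : A →+* B := (algebraMap A (FractionRing A)).codRestrict B hAB
    let g : B →+* integralClosure A (FractionRing A) :=
      { toFun := fun b => ⟨b, hBC b b.2⟩
        map_one' := rfl
        map_mul' := fun _ _ => rfl
        map_zero' := rfl
        map_add' := fun _ _ => rfl }
    have hg : Function.Injective g := fun a b h => by
      have h1 : ((g a : integralClosure A (FractionRing A)) : FractionRing A) = g b := by rw [h]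
      exact Subtype.ext h1
    have hgf : g.comp f = algebraMap A (integralClosure A (FractionRing A)) := rfl
    let : Algebra B (integralClosure A (FractionRing A)) := g.toAlgebra
    have : Algebra.IsIntegral B (integralClosure A (FractionRing A)) := by
      refine ⟨fun c => ?_⟩
      apply RingHom.IsIntegral.tower_top f g
      rw [hgf]
      exact fun c => Algebra.IsIntegral.isIntegral c
    obtain ⟨Q, hQp, hQ⟩ := Ideal.exists_ideal_over_prime_of_isIntegral_of_isDomain
      (S := integralClosure A (FractionRing A)) P (by
        rw [(RingHom.injective_iff_ker_eq_bot (algebraMap B _)).1 hg]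
        exact bot_le)
    have hone : HeightOneIdeal Q := by
      refine ⟨hQp, ⟨⊥, Ideal.isPrime_bot, bot_lt_iff_ne_bot.2 ?_⟩, ?_⟩
      · rintro rfl
        obtain ⟨b, hb, hb0⟩ := hP0
        rw [← hQ, Ideal.mem_comap, Ideal.mem_bot] at hb
        exact hb0 (hg (by rw [map_zero]; exact hb))
      · intro hch
        have := chain_comap B _ Q hch
        rw [hQ] at this
        exact hnc this
    obtain ⟨a, s, hs, hsa⟩ := (hA' x).1 hx _ (hstar Q hone)
    apply hs
    have hfs : f s ∈ P := by
      apply hPz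
      refine ⟨f a, ?_⟩
      change algebraMap A (FractionRing A) a = algebraMap A (FractionRing A) s * x
      rw [← hsa, mul_comm]
    rw [← hQ] at hfs
    exact hfs
end

section
/- Let R̃ be a ring with R ⊆ R̃ ⊆ K such that R̃ is finitely generated as an R-module, and let a, b ∈ R be nonzero. Then the R-modules R/bR, R/aR, R̃/bR̃, R̃/aR̃ all have finite length and length_R(R/bR) − length_R(R/aR) = length_R(R̃/bR̃) − length_R(R̃/aR̃) as integers. -/
set_option synthInstance.maxHeartbeats 1000000
set_option maxHeartbeats 2000000

/-!
`R` is a Noetherian local integral domain of Krull dimension `1` with fraction field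
`K = FractionRing R`.  The length of an `R`-module is expressed by the predicate
`HasLength R M d`: there is a maximal chain (composition series)
`⊥ = c₀ ⋖ c₁ ⋖ ⋯ ⋖ c_d = ⊤` of submodules of `M`; by Jordan–Hölder this `d` is unique
when it exists, and its existence expresses that `M` has finite length `d`.
-/

/-- The `R`-module `M` has (finite) length `d`. -/
def HasLength (R M : Type*) [Ring R] [AddCommGroup M] [Module R M] (d : ℕ) : Prop :=
  ∃ c : Fin (d + 1) → Submodule R M, c 0 = ⊥ ∧ c (Fin.last d) = ⊤ ∧
    ∀ i : Fin d, c i.castSucc ⋖ c i.succ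

theorem hasLength_of_length_ne_top {R M : Type*} [Ring R] [AddCommGroup M] [Module R M]
    (h : Module.length R M ≠ ⊤) : HasLength R M (Module.length R M).toNat := by
  obtain ⟨s, hs1, hs2⟩ :=
    isFiniteLength_iff_exists_compositionSeries.mp (Module.length_ne_top_iff.mp h)
  rw [← Module.length_compositionSeries s hs1 hs2]
  exact ⟨s.toFun, hs1, hs2, s.step⟩

theorem length_comp {R A B C : Type*} [CommRing R] [AddCommGroup A] [AddCommGroup B]
    [AddCommGroup C] [Module R A] [Module R B] [Module R C] (f : A →ₗ[R] B) (g : B →ₗ[R] C)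
    (hg : Function.Injective g) :
    Module.length R (C ⧸ LinearMap.range (g ∘ₗ f)) =
      Module.length R (B ⧸ LinearMap.range f) + Module.length R (C ⧸ LinearMap.range g) := by
  have h1 : LinearMap.range f ≤ (LinearMap.range (g ∘ₗ f)).comap g := by
    rintro _ ⟨x, rfl⟩
    exact ⟨x, rfl⟩
  have h2 : LinearMap.range (g ∘ₗ f) ≤ LinearMap.range g := LinearMap.range_comp_le_range f g
  refine Module.length_eq_add_of_exact (Submodule.mapQ _ _ g h1) (Submodule.factor h2) ?_
    (Submodule.factor_surjective h2) ?_
  · rw [← LinearMap.ker_eq_bot, eq_bot_iff]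
    intro x hx
    obtain ⟨y, rfl⟩ := Submodule.mkQ_surjective _ x
    rw [LinearMap.mem_ker, Submodule.mkQ_apply, Submodule.mapQ_apply,
      Submodule.Quotient.mk_eq_zero] at hx
    obtain ⟨z, hz⟩ := hx
    rw [Submodule.mem_bot, Submodule.mkQ_apply, Submodule.Quotient.mk_eq_zero]
    exact ⟨z, hg hz⟩
  · intro x
    obtain ⟨y, rfl⟩ := Submodule.mkQ_surjective _ x
    constructor
    · intro h
      have h' : y ∈ LinearMap.range g := (Submodule.Quotient.mk_eq_zero _).mp h
      obtain ⟨z, rfl⟩ := h'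
      exact ⟨Submodule.Quotient.mk z, rfl⟩
    · rintro ⟨z, hz⟩
      obtain ⟨w, rfl⟩ := Submodule.mkQ_surjective _ z
      rw [← hz]
      exact (Submodule.Quotient.mk_eq_zero _).mpr ⟨w, rfl⟩

theorem length_ne_top_of_torsion {R M : Type*} [CommRing R] [AddCommGroup M]
    [Module R M] [Module.Finite R M] (d : R)
    (hR : Module.length R (R ⧸ Ideal.span {d}) ≠ ⊤)
    (h : ∀ x : M, d • x = 0) : Module.length R M ≠ ⊤ := by
  obtain ⟨n, f, hf⟩ := Module.Finite.exists_fin' R M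
  have hfl := isFiniteLength_iff_isNoetherian_isArtinian.mp (Module.length_ne_top_iff.mp hR)
  have := hfl.1
  have := hfl.2
  -- the map factors through `(R/d)^n`
  have hk : ∀ i : Fin n, Ideal.span {d} ≤ LinearMap.ker (LinearMap.toSpanSingleton R M
      (f (Pi.single i 1))) := by
    intro i x hx
    obtain ⟨y, rfl⟩ := Ideal.mem_span_singleton'.mp hx
    simp [mul_smul, h]
  let g : (Fin n → R ⧸ Ideal.span {d}) →ₗ[R] M :=
    ∑ i, (Submodule.liftQ (Ideal.span {d}) _ (hk i)) ∘ₗ LinearMap.proj i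
  have hg : Function.Surjective g := by
    intro m
    obtain ⟨v, rfl⟩ := hf m
    refine ⟨fun i => Submodule.Quotient.mk (v i), ?_⟩
    simp only [g, LinearMap.sum_apply, LinearMap.comp_apply, LinearMap.proj_apply,
      Submodule.liftQ_apply, LinearMap.toSpanSingleton_apply]
    conv_rhs => rw [LinearMap.pi_apply_eq_sum_univ f v]
    refine Finset.sum_congr rfl fun i _ => ?_
    congr 2
    ext j
    simp [Pi.single_apply, eq_comm]
  exact ne_top_of_le_ne_top Module.length_ne_top (Module.length_le_of_surjective g hg)

theorem length_quot_eq {R S : Type*} [CommRing R] [IsDomain R] [IsNoetherianRing R]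
    [Ring.KrullDimLE 1 R] [CommRing S] [IsDomain S] [Algebra R S] [Module.Finite R S]
    (hinj : Function.Injective (algebraMap R S))
    (d : R) (hd : d ≠ 0) (hdS : ∀ x : S, ∃ r : R, algebraMap R S r = d • x)
    (c : R) (hc : c ≠ 0) :
    Module.length R (R ⧸ Ideal.span {c}) ≠ ⊤ ∧
    Module.length R (S ⧸ Ideal.span {algebraMap R S c}) = Module.length R (R ⧸ Ideal.span {c}) := by
  have hfin : ∀ e : R, e ≠ 0 → Module.length R (R ⧸ Ideal.span {e}) ≠ ⊤ := fun e he =>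
    Ring.ord_ne_top (mem_nonZeroDivisors_of_ne_zero he)
  refine ⟨hfin c hc, ?_⟩
  let f : R →ₗ[R] S := Algebra.linearMap R S
  let mR : R →ₗ[R] R := LinearMap.lsmul R R c
  let mS : S →ₗ[R] S := LinearMap.lsmul R S c
  have hcS : algebraMap R S c ≠ 0 := fun h => hc (hinj (by rw [h, map_zero]))
  have hmS : Function.Injective mS := by
    intro x y hxy
    have : c • x = c • y := hxy
    rw [Algebra.smul_def, Algebra.smul_def] at this
    exact mul_left_cancel₀ hcS this
  have hcomm : f ∘ₗ mR = mS ∘ₗ f := by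
    ext
    simp [f, mR, mS, Algebra.smul_def]
  have e1 := length_comp mR f hinj
  have e2 := length_comp f mS hmS
  rw [hcomm, e2] at e1
  have hl : Module.length R (S ⧸ LinearMap.range f) ≠ ⊤ := by
    refine length_ne_top_of_torsion d (hfin d hd) ?_
    intro x
    obtain ⟨y, rfl⟩ := Submodule.mkQ_surjective _ x
    obtain ⟨r, hr⟩ := hdS y
    rw [← map_smul, ← hr]
    exact (Submodule.Quotient.mk_eq_zero _).mpr ⟨r, rfl⟩
  have e3 : LinearMap.range mR = Ideal.span {c} := by
    ext x
    rw [Ideal.mem_span_singleton']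
    simp [mR, mul_comm]
  let p : S →ₗ[R] S ⧸ Ideal.span {algebraMap R S c} :=
    (Ideal.Quotient.mkₐ R (Ideal.span {algebraMap R S c})).toLinearMap
  have hp : Function.Surjective p := Ideal.Quotient.mk_surjective
  have e4 : LinearMap.range mS = LinearMap.ker p := by
    ext x
    have : x ∈ LinearMap.ker p ↔ x ∈ Ideal.span {algebraMap R S c} :=
      Ideal.Quotient.eq_zero_iff_mem
    rw [this, Ideal.mem_span_singleton']
    simp [mS, mul_comm, Algebra.smul_def]
  have e5 := ((Submodule.quotEquivOfEq _ _ e4).trans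
    (p.quotKerEquivOfSurjective hp)).length_eq
  have e6 := (Submodule.quotEquivOfEq _ _ e3).length_eq
  rw [← e5, ← e6]
  rw [add_comm] at e1
  exact WithTop.add_right_cancel hl e1

/-- If `R ⊆ R̃ ⊆ K` with `R̃` a finitely generated `R`-module, and
`a, b ∈ R` are nonzero, then `R/bR`, `R/aR`, `R̃/bR̃`, `R̃/aR̃` have finite lengths
`l₁, l₂, l₃, l₄` as `R`-modules, and `l₁ − l₂ = l₃ − l₄` in `ℤ`. -/
theorem statement16 (R : Type) [CommRing R] [IsDomain R] [IsNoetherianRing R]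
    [IsLocalRing R] (hdim : ringKrullDim R = 1)
    (Rt : Subalgebra R (FractionRing R)) (hRt : Module.Finite R Rt)
    (a b : R) (ha : a ≠ 0) (hb : b ≠ 0) :
    ∃ l₁ l₂ l₃ l₄ : ℕ,
      HasLength R (R ⧸ Ideal.span {b}) l₁ ∧
      HasLength R (R ⧸ Ideal.span {a}) l₂ ∧
      HasLength R (Rt ⧸ Ideal.span {algebraMap R Rt b}) l₃ ∧
      HasLength R (Rt ⧸ Ideal.span {algebraMap R Rt a}) l₄ ∧
      (l₁ : ℤ) - l₂ = (l₃ : ℤ) - l₄ := by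
  
  have : Ring.KrullDimLE 1 R := (Ring.krullDimLE_iff).mpr hdim.le
  have hinj : Function.Injective (algebraMap R Rt) := FaithfulSMul.algebraMap_injective R Rt
  obtain ⟨d, hd, hdS⟩ : ∃ d : R, d ≠ 0 ∧ ∀ x : Rt, ∃ r : R, algebraMap R Rt r = d • x := by
    obtain ⟨s, hs⟩ := hRt.fg_top
    classical
    obtain ⟨d, hd⟩ := IsLocalization.exist_integer_multiples_of_finset (nonZeroDivisors R)
      (s.image (Subtype.val : Rt → FractionRing R))
    refine ⟨d, nonZeroDivisors.ne_zero d.2, fun x => ?_⟩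
    have hx : x ∈ Submodule.span R (s : Set Rt) := hs ▸ Submodule.mem_top
    induction hx using Submodule.span_induction with
    | mem x hx =>
      obtain ⟨r, hr⟩ := hd x.1 (Finset.mem_image_of_mem _ hx)
      exact ⟨r, Subtype.ext hr⟩
    | zero => exact ⟨0, by simp⟩
    | add x y _ _ hx hy =>
      obtain ⟨r, hr⟩ := hx
      obtain ⟨t, ht⟩ := hy
      exact ⟨r + t, by rw [map_add, hr, ht, smul_add]⟩
    | smul k x _ hx =>
      obtain ⟨r, hr⟩ := hx
      exact ⟨k * r, by rw [map_mul, hr, ← Algebra.smul_def, smul_comm]⟩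
  obtain ⟨fa, ea⟩ := length_quot_eq hinj d hd hdS a ha
  obtain ⟨fb, eb⟩ := length_quot_eq hinj d hd hdS b hb
  refine ⟨_, _, _, _, hasLength_of_length_ne_top fb, hasLength_of_length_ne_top fa,
    hasLength_of_length_ne_top (eb ▸ fb), hasLength_of_length_ne_top (ea ▸ fa), ?_⟩
  rw [ea, eb]
end

section
/- Let A be an integral domain which is a finitely generated algebra over a field k of characteristic zero and has Krull dimension 2. Then the set of prime ideals p of A such that the local ring A_p is not Cohen–Macaulay is finite. -/
/-- A local ring `S` is Cohen–Macaulay: its Krull dimension is a natural number `d` and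
there is a regular sequence of length `d` in its maximal ideal (i.e. depth = dimension). -/
def IsCohenMacaulayLocal (S : Type*) [CommRing S] [IsLocalRing S] : Prop :=
  ∃ d : ℕ, ringKrullDim S = d ∧
    ∃ r : Fin d → S, IsRegSeq (IsLocalRing.maximalIdeal S) r

theorem cm_of_height_le_one {A : Type} [CommRing A] [IsDomain A] (p : Ideal A) [p.IsPrime]
    (d : ℕ) (hd : p.height = d) (h1 : d ≤ 1) :
    IsCohenMacaulayLocal (Localization.AtPrime p) := by
  refine ⟨d, ?_, ?_⟩
  · rw [IsLocalization.AtPrime.ringKrullDim_eq_height p, hd]; rfl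
  · interval_cases d
    · exact ⟨fun i => 0, fun i => i.elim0, fun i => i.elim0⟩
    · have hp : p ≠ ⊥ := by
        intro h
        subst h
        simp [Ideal.height_bot] at hd
      obtain ⟨a, ha, ha0⟩ := Submodule.exists_mem_ne_zero_of_ne_bot hp
      refine ⟨fun _ => algebraMap A _ a, fun i => ?_, fun i x hx => ?_⟩
      · exact (IsLocalization.AtPrime.to_map_mem_maximal_iff _ p a).2 ha
      · have : {y : Localization.AtPrime p | ∃ j : Fin 1, j < i ∧
            y = (fun _ : Fin 1 => algebraMap A (Localization.AtPrime p) a) j} = ∅ := by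
          ext y
          simp only [Set.mem_ofPred_eq, Set.mem_empty_iff_false, iff_false]
          rintro ⟨j, hj, _⟩
          omega
        rw [this] at hx ⊢
        have : IsDomain (Localization.AtPrime p) :=
          IsLocalization.isDomain_localization p.primeCompl_le_nonZeroDivisors
        rw [Ideal.span_empty, Ideal.mem_bot] at hx ⊢
        rcases mul_eq_zero.1 hx with h | h
        · exact absurd ((IsLocalization.injective (Localization.AtPrime p)
            p.primeCompl_le_nonZeroDivisors) (h.trans (map_zero _).symm)) ha0
        · exact h

theorem cm_of_pair {A : Type} [CommRing A] [IsDomain A] (p : Ideal A) [p.IsPrime]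
    (hd : p.height = 2) (u v g : A) (hu : u ∈ p) (hv : v ∈ p) (hu0 : u ≠ 0) (hg : g ∉ p)
    (H : ∀ x y, v * x = u * y → ∃ z, g * x = u * z) :
    IsCohenMacaulayLocal (Localization.AtPrime p) := by
  have : IsDomain (Localization.AtPrime p) :=
    IsLocalization.isDomain_localization p.primeCompl_le_nonZeroDivisors
  have inj := IsLocalization.injective (Localization.AtPrime p) p.primeCompl_le_nonZeroDivisors
  refine ⟨2, ?_, ?_⟩
  · rw [IsLocalization.AtPrime.ringKrullDim_eq_height p, hd]; rfl
  refine ⟨![algebraMap A _ u, algebraMap A _ v], fun i => ?_, fun i x hx => ?_⟩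
  · fin_cases i
    · exact (IsLocalization.AtPrime.to_map_mem_maximal_iff _ p u).2 hu
    · exact (IsLocalization.AtPrime.to_map_mem_maximal_iff _ p v).2 hv
  · fin_cases i
    · simp only [Fin.zero_eta, not_lt_zero, false_and, exists_false, Matrix.cons_val_zero] at hx ⊢
      simp only [Fin.not_lt_zero, false_and, exists_false, Set.ofPred_false, Ideal.span_empty,
        Ideal.mem_bot] at hx ⊢
      rcases mul_eq_zero.1 hx with h | h
      · exact absurd (inj (h.trans (map_zero _).symm)) hu0
      · exact h
    · have : {y : Localization.AtPrime p | ∃ j : Fin 2, j < 1 ∧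
            y = (![algebraMap A _ u, algebraMap A _ v] : Fin 2 → Localization.AtPrime p) j}
            = {algebraMap A _ u} := by
          ext y
          simp [Fin.exists_fin_two]
      simp only [Fin.mk_one] at hx ⊢
      rw [this] at hx ⊢
      rw [Ideal.mem_span_singleton'] at hx ⊢
      obtain ⟨y, hy⟩ := hx
      obtain ⟨⟨x', s⟩, hxs⟩ := IsLocalization.surj p.primeCompl x
      obtain ⟨⟨y', t⟩, hyt⟩ := IsLocalization.surj p.primeCompl y
      simp only [Matrix.cons_val_one, Matrix.cons_val_zero] at hxs hyt hy
      have key : v * (x' * t) = u * (y' * s) := by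
        apply inj
        simp only [map_mul, ← hxs, ← hyt]
        linear_combination (-(algebraMap A _ (s : A)) * algebraMap A _ (t : A)) * hy
      obtain ⟨z, hz⟩ := H _ _ key
      have hgst : g * t * s ∈ p.primeCompl :=
        mul_mem (mul_mem hg t.2) s.2
      have hunit := IsLocalization.map_units (Localization.AtPrime p) ⟨_, hgst⟩
      refine ⟨IsLocalization.mk' _ z ⟨_, hgst⟩, ?_⟩
      apply hunit.mul_left_cancel
      have h1 := IsLocalization.mk'_spec (Localization.AtPrime p) z ⟨_, hgst⟩
      have h2 := congrArg (algebraMap A (Localization.AtPrime p)) hz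
      simp only [map_mul] at h1 h2 ⊢
      rw [← hxs] at h2
      linear_combination (algebraMap A _ u) * h1 - h2

/-- Division in free modules. -/
theorem free_div {B M ι : Type*} [CommRing B] [AddCommGroup M] [Module B M] (b : Module.Basis ι B M)
    (u v : B) (hu : Prime u) (hv : ¬ u ∣ v) (x y : M) (h : v • x = u • y) : ∃ z, x = u • z := by
  have h1 : ∀ i, u ∣ b.repr x i := by
    intro i
    have := congrArg (fun m => b.repr m i) h
    simp only [map_smul, Finsupp.smul_apply, smul_eq_mul] at this
    exact (hu.dvd_or_dvd (Dvd.intro _ this.symm)).resolve_left hv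
  choose e he using h1
  refine ⟨∑ i ∈ (b.repr x).support, e i • b i, ?_⟩
  conv_lhs => rw [← b.linearCombination_repr x]
  rw [Finsupp.linearCombination_apply, Finsupp.sum, Finset.smul_sum]
  refine Finset.sum_congr rfl fun i _ => ?_
  rw [he i, mul_smul]

theorem exists_generic {B A : Type} [CommRing B] [IsDomain B] [CommRing A] [IsDomain A]
    [Algebra B A] [Module.Finite B A] :
    ∃ f : B, f ≠ 0 ∧ ∀ u v : B, Prime u → ¬ u ∣ v → ∀ x y : A,
      v • x = u • y → ∃ z, f • x = u • z := by
  obtain ⟨s, hs, hmax⟩ := exists_maximal_linearIndepOn B (id : A → A)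
  rw [Set.image_id] at hmax
  have htor : Module.IsTorsion B (A ⧸ Submodule.span B s) := by
    intro x
    obtain ⟨a, rfl⟩ := Submodule.Quotient.mk_surjective _ x
    by_cases ha : a ∈ s
    · refine ⟨1, ?_⟩
      rw [one_smul]
      exact (Submodule.Quotient.mk_eq_zero _).2 (Submodule.subset_span ha)
    · obtain ⟨c, hc, hca⟩ := hmax a ha
      refine ⟨⟨c, mem_nonZeroDivisors_of_ne_zero hc⟩, ?_⟩
      exact (Submodule.Quotient.mk_eq_zero _).2 hca
  obtain ⟨f, hf, hf0⟩ := Submodule.annihilator_top_inter_nonZeroDivisors htor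
  have hfm : ∀ a : A, f • a ∈ Submodule.span B s := fun a =>
    (Submodule.Quotient.mk_eq_zero _).1
      (Submodule.mem_annihilator.1 hf (Submodule.Quotient.mk a) trivial)
  refine ⟨f, nonZeroDivisors.ne_zero hf0, fun u v hu hv x y h => ?_⟩
  have hs' : LinearIndependent B (fun x : s => (x : A)) := hs
  have b := Module.Basis.span hs'
  rw [Subtype.range_coe] at b
  obtain ⟨z, hz⟩ := free_div b u v hu hv ⟨f • x, hfm x⟩ ⟨f • y, hfm y⟩ (by
    ext
    simp only [SetLike.mk_smul_mk]
    rw [smul_comm, h, smul_comm])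
  exact ⟨z, congrArg Subtype.val hz⟩

theorem exists_middle {A : Type} [CommRing A] [IsDomain A] [IsNoetherianRing A] (p : Ideal A)
    [p.IsPrime] (hd : p.height = 2) : ∃ q : Ideal A, q.IsPrime ∧ q ≠ ⊥ ∧ q < p := by
  by_contra hcon
  push Not at hcon
  obtain ⟨l, hl, hlen⟩ := p.exists_ltSeries_length_eq_height
  rw [hd] at hlen
  have hlen' : l.length = 2 := by exact_mod_cast hlen
  have h01 : l ⟨0, by omega⟩ < l ⟨1, by omega⟩ := l.strictMono (by rw [Fin.lt_def]; simp)
  have h12 : l ⟨1, by omega⟩ < l.last := l.strictMono (by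
    rw [Fin.lt_def]; simp [hlen'])
  rw [hl] at h12
  have hne : (l ⟨1, by omega⟩).asIdeal ≠ ⊥ := (bot_le.trans_lt
    (show (l ⟨0, by omega⟩).asIdeal < (l ⟨1, by omega⟩).asIdeal from h01)).ne'
  exact hcon _ (l ⟨1, by omega⟩).2 hne h12

/-- If `A` is an integral domain, finitely generated over a field `k`
of characteristic zero, of Krull dimension `2`, then the set of primes `p` of `A` such
that the local ring `A_p` is not Cohen–Macaulay is finite. -/
theorem statement18 (k A : Type) [Field k] [CharZero k]
    [CommRing A] [IsDomain A] [Algebra k A]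
    (hfg : Algebra.FiniteType k A) (hdim : ringKrullDim A = 2) :
    {p : PrimeSpectrum A |
      ¬ IsCohenMacaulayLocal (Localization.AtPrime p.asIdeal)}.Finite := by
  have : IsNoetherianRing A := Algebra.FiniteType.isNoetherianRing k A
  obtain ⟨n, φ, hinj, hfin⟩ := exists_finite_inj_algHom_of_fg k A
  letI : Algebra (MvPolynomial (Fin n) k) A := φ.toRingHom.toAlgebra
  have : Module.Finite (MvPolynomial (Fin n) k) A := hfin
  have hinj' : Function.Injective (algebraMap (MvPolynomial (Fin n) k) A) := hinj
  obtain ⟨f, hf0, hf⟩ := exists_generic (B := MvPolynomial (Fin n) k) (A := A)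
  set F : A := algebraMap _ A f with hF
  have hF0 : F ≠ 0 := fun h => hf0 (hinj' (h.trans (map_zero _).symm))
  refine Set.Finite.subset ((associatedPrimes.finite A (A ⧸ Ideal.span {F})).preimage
    (f := PrimeSpectrum.asIdeal) (fun a _ b _ h => PrimeSpectrum.ext h)) ?_
  rintro ⟨p, hp⟩ hbad
  simp only [Set.mem_ofPred_eq, Set.mem_preimage] at hbad ⊢
  have hle : p.height ≤ 2 := by
    have := Ideal.height_le_ringKrullDim_of_isPrime (I := p)
    rw [hdim] at this
    exact WithBot.coe_le_coe.1 this
  have h2 : p.height = 2 := by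
    obtain ⟨d, hd⟩ := ENat.ne_top_iff_exists.1 (ne_top_of_le_ne_top (by simp) hle)
    rw [← hd] at hle
    have hd2 : d ≤ 2 := by exact_mod_cast hle
    by_cases h1 : d ≤ 1
    · exact absurd (cm_of_height_le_one p d hd.symm h1) hbad
    · have : d = 2 := by omega
      rw [← hd, this]; rfl
  by_contra hass
  apply hbad
  by_cases hFp : F ∈ p
  · have hnot : ¬ ((p : Set A) ⊆ ⋃ q ∈ associatedPrimes A (A ⧸ Ideal.span {F}), (q : Set A)) := by
      intro hsub
      obtain ⟨q, hq, hpq⟩ := (Ideal.subset_union_prime_finite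
        (associatedPrimes.finite A (A ⧸ Ideal.span {F})) (f := id) 0 0
        (fun _ h _ _ => h.isPrime)).1 hsub
      have : q.IsPrime := hq.isPrime
      rcases eq_or_lt_of_le hpq with h | h
      · exact hass (by rw [h]; exact hq)
      · have h3 := Ideal.height_add_one_le_of_lt_of_isPrime (I := p) (J := q) h
        have h4 := Ideal.height_le_ringKrullDim_of_isPrime (I := q)
        rw [hdim] at h4
        have h5 : q.height ≤ 2 := WithBot.coe_le_coe.1 h4
        rw [h2] at h3
        exact absurd (h3.trans h5) (by decide)
    rw [biUnion_associatedPrimes_eq_zero_divisors, Set.not_subset] at hnot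
    obtain ⟨v, hv, hnz⟩ := hnot
    refine cm_of_pair p h2 F v 1 hFp hv hF0 (fun h => hp.ne_top ((Ideal.eq_top_iff_one _).2 h))
      fun x y hxy => ?_
    by_contra hx
    refine hnz ⟨Ideal.Quotient.mk _ x, fun h => hx ?_, ?_⟩
    · obtain ⟨z, hz⟩ := Ideal.mem_span_singleton.1 (Ideal.Quotient.eq_zero_iff_mem.1 h)
      exact ⟨z, by rw [one_mul, hz]⟩
    · change Ideal.Quotient.mk _ (v * x) = 0
      rw [Ideal.Quotient.eq_zero_iff_mem, Ideal.mem_span_singleton]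
      exact ⟨y, hxy⟩
  · obtain ⟨q, hq, hq0, hqp⟩ := exists_middle p h2
    have hlt := Ideal.IsIntegral.comap_lt_comap (R := MvPolynomial (Fin n) k) hqp
    have hq0' := Ideal.IsIntegral.comap_lt_comap (R := MvPolynomial (Fin n) k)
      (bot_lt_iff_ne_bot.2 hq0)
    have : (q.comap (algebraMap (MvPolynomial (Fin n) k) A)).IsPrime := Ideal.comap_isPrime _ _
    obtain ⟨u, huq, hu⟩ := Ideal.IsPrime.exists_mem_prime_of_ne_bot this
      (bot_le.trans_lt hq0').ne'
    obtain ⟨_, v, hvp, hvq⟩ := SetLike.lt_iff_le_and_exists.1 hlt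
    refine cm_of_pair p h2 (algebraMap _ A u) (algebraMap _ A v) F (hqp.le huq) hvp
      (fun h => hu.ne_zero (hinj' (h.trans (map_zero _).symm))) hFp fun x y hxy => ?_
    obtain ⟨z, hz⟩ := hf u v hu (fun h => hvq (Ideal.mem_of_dvd _ h huq)) x y
      (by simpa only [Algebra.smul_def] using hxy)
    exact ⟨z, by simpa only [Algebra.smul_def] using hz⟩
end
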